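/- Let q ∈ ℕ∪{0}, d, d*, K ∈ ℕ, α ∈ (0,∞), τ ∈ (0,∞], β ∈ (0,∞), Λ ∈ (1,∞). Assume d*·q ≤ K·q, d* ≤ d, and not both α < 1 and τ ≥ 1. Then there exists a constant c ∈ (0,∞) depending only on (β,Λ) such that for every r ∈ [c,∞) and every integer n ≥ 1/(Λ−1): inf_{f̂_n} sup{E_{P^⊗n}[E_P(f̂_n)] : P ∈ H^{d,β,r,Λ}_{q,K,d*} ∩ T^{d,∞}_{α,τ}} ≥ 1/(32·n), where the infimum is over all estimators based on the i.i.d. sample of size n. -/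

import Mathlib

open MeasureTheory ENNReal Set

noncomputable section

namespace ZZS

/-! ## Basic geometry -/

/-- The closed unit cube `[0,1]^m`. -/
def cube (m : ℕ) : Set (Fin m → ℝ) := Set.univ.pi fun _ => Set.Icc (0 : ℝ) 1

/-- The open unit cube `(0,1)^m`. -/
def cubeo (m : ℕ) : Set (Fin m → ℝ) := Set.univ.pi fun _ => Set.Ioo (0 : ℝ) 1

/-- The label set `{-1, 1} ⊆ ℝ`. -/
def labels : Set ℝ := {-1, 1}

/-- Euclidean distance on `Fin m → ℝ`. -/
def e2 {m : ℕ} (x z : Fin m → ℝ) : ℝ := Real.sqrt (∑ i, (x i - z i) ^ 2)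

/-! ## Multi-index partial derivatives and Hölder balls -/

/-- Iterated partial derivative along a list of coordinate directions. -/
def pderivList {m : ℕ} : List (Fin m) → ((Fin m → ℝ) → ℝ) → (Fin m → ℝ) → ℝ
  | [], f => f
  | i :: l, f => pderivList l fun x => fderiv ℝ f x (Pi.single i 1)

/-- The canonical list of directions attached to a multi-index. -/
def idxList {m : ℕ} (u : Fin m → ℕ) : List (Fin m) :=
  (List.finRange m).flatMap fun i => List.replicate (u i) i

/-- The partial derivative `D^u f` for a multi-index `u`. -/
def Dm {m : ℕ} (u : Fin m → ℕ) (f : (Fin m → ℝ) → ℝ) : (Fin m → ℝ) → ℝ :=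
  pderivList (idxList u) f

/-- The order `‖u‖₁` of a multi-index `u`. -/
def mord {m : ℕ} (u : Fin m → ℕ) : ℕ := ∑ i, u i

/-- The Hölder-`β` norm of `f`, suprema taken over the set `S` (value in `ℝ≥0∞`). -/
def holderNormOn (m : ℕ) (β : ℝ) (S : Set (Fin m → ℝ)) (f : (Fin m → ℝ) → ℝ) : ℝ≥0∞ :=
  (⨆ (u : Fin m → ℕ) (_ : (mord u : ℝ) < β) (x ∈ S), ENNReal.ofReal |Dm u f x|) +
    ⨆ (u : Fin m → ℕ) (_ : (⌈β⌉ : ℝ) - 1 ≤ (mord u : ℝ) ∧ (mord u : ℝ) < β)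
      (x ∈ S) (z ∈ S) (_ : x ≠ z),
      ENNReal.ofReal |Dm u f x - Dm u f z| /
        ENNReal.ofReal (e2 x z) ^ (β + 1 - (⌈β⌉ : ℝ))

/-- `⌈β - 1⌉`, the number of derivatives required for Hölder-`β` smoothness. -/
def smoothOrder (β : ℝ) : ℕ := ⌈β - 1⌉₊

/-- The Hölder ball `B^β_r([0,1]^m)`:  `⌈β-1⌉`-times continuously differentiable functions on
the interior of the cube (with uniformly continuous derivatives, so that they extend
continuously), with Hölder-`β` norm at most `r`. -/
def HolderBall (m : ℕ) (β r : ℝ) : Set ((Fin m → ℝ) → ℝ) :=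
  {f | ContinuousOn f (cube m) ∧
    ContDiffOn ℝ (smoothOrder β : ℕ∞) f (cubeo m) ∧
    (∀ u : Fin m → ℕ, (mord u : ℝ) < β → UniformContinuousOn (Dm u f) (cubeo m)) ∧
    holderNormOn m β (cubeo m) f ≤ ENNReal.ofReal r}

/-! ## Compositional function classes -/

/-- `G^H_m(dstar, β, r)`: Hölder-`β` functions of `dstar` of the `m` coordinates. -/
def GH (m dstar : ℕ) (β r : ℝ) : Set ((Fin m → ℝ) → ℝ) :=
  {f | ∃ (e : Fin dstar → Fin m) (g : (Fin dstar → ℝ) → ℝ),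
    StrictMono e ∧ g ∈ HolderBall dstar β r ∧ ∀ x ∈ cube m, f x = g fun j => x (e j)}

/-- `G^M_m(dmax)`: maxima of at most `dmax` coordinates. -/
def GM (m dmax : ℕ) : Set ((Fin m → ℝ) → ℝ) :=
  {f | ∃ (I : Finset (Fin m)) (hI : I.Nonempty), I.card ≤ dmax ∧
    ∀ x ∈ cube m, f x = I.sup' hI fun i => x i}

/-- The compositional class `G^CHOM_d(q, K, dmax, dstar, β, r)`. -/
def GCHOM (K dmax dstar : ℕ) (β r : ℝ) : ℕ → (d : ℕ) → Set ((Fin d → ℝ) → ℝ)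
  | 0, d => {f | ∃ h ∈ GH d dstar β r ∪ GM d dmax, ∀ x ∈ cube d, f x = h x}
  | q + 1, d =>
    {f | ∃ (H : (Fin d → ℝ) → Fin K → ℝ) (g : (Fin K → ℝ) → ℝ),
      (∀ j, (fun x => H x j) ∈ GH d dstar β r ∪ GM d dmax) ∧
      (∀ x ∈ cube d, H x ∈ cube K) ∧
      g ∈ GCHOM K dmax dstar β r q K ∧ ∀ x ∈ cube d, f x = g (H x)}

/-- The compositional class `G^CH_d(q, K, dstar, β, r)` (no max-value components). -/
def GCH (K dstar : ℕ) (β r : ℝ) : ℕ → (d : ℕ) → Set ((Fin d → ℝ) → ℝ)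
  | 0, d => {f | ∃ h ∈ GH d dstar β r, ∀ x ∈ cube d, f x = h x}
  | q + 1, d =>
    {f | ∃ (H : (Fin d → ℝ) → Fin K → ℝ) (g : (Fin K → ℝ) → ℝ),
      (∀ j, (fun x => H x j) ∈ GH d dstar β r) ∧
      (∀ x ∈ cube d, H x ∈ cube K) ∧
      g ∈ GCH K dstar β r q K ∧ ∀ x ∈ cube d, f x = g (H x)}

/-! ## Losses, risks, and data distributions -/

/-- The sign function (`sgn 0 = 1`). -/
def sgn (t : ℝ) : ℝ := if 0 ≤ t then 1 else -1

/-- The hinge loss. -/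
def hinge (t : ℝ) : ℝ := max 0 (1 - t)

/-- The truncation operator `T_F`. -/
def trunc (F t : ℝ) : ℝ := min F (max (-F) t)

/-- The joint distribution `P_{η,Q}` on `[0,1]^d × {-1,1}` with input marginal `Q` and
conditional class probability function `η`. -/
def jointMeasure {d : ℕ} (η : (Fin d → ℝ) → ℝ) (Q : Measure (Fin d → ℝ)) :
    Measure ((Fin d → ℝ) × ℝ) :=
  Q.bind fun x =>
    ENNReal.ofReal (η x) • Measure.dirac (x, (1 : ℝ)) +
      ENNReal.ofReal (1 - η x) • Measure.dirac (x, (-1 : ℝ))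

/-- The 0-1 risk (misclassification error). -/
def risk01 {d : ℕ} (P : Measure ((Fin d → ℝ) × ℝ)) (f : (Fin d → ℝ) → ℝ) : ℝ :=
  (P {p | sgn (f p.1) ≠ p.2}).toReal

/-- The infimum of the 0-1 risk over all measurable functions. -/
def bayes01 {d : ℕ} (P : Measure ((Fin d → ℝ) × ℝ)) : ℝ :=
  ⨅ g : {g : (Fin d → ℝ) → ℝ // Measurable g}, risk01 P g.1

/-- The excess 0-1 risk. -/
def excess01 {d : ℕ} (P : Measure ((Fin d → ℝ) × ℝ)) (f : (Fin d → ℝ) → ℝ) : ℝ :=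
  risk01 P f - bayes01 P

/-- The `φ`-risk. -/
def riskPhi {d : ℕ} (φ : ℝ → ℝ) (P : Measure ((Fin d → ℝ) × ℝ)) (f : (Fin d → ℝ) → ℝ) : ℝ :=
  ∫ p, φ (p.2 * f p.1) ∂P

/-- The infimum of the `φ`-risk over all measurable functions. -/
def bayesPhi {d : ℕ} (φ : ℝ → ℝ) (P : Measure ((Fin d → ℝ) × ℝ)) : ℝ :=
  ⨅ g : {g : (Fin d → ℝ) → ℝ // Measurable g}, riskPhi φ P g.1

/-- The excess `φ`-risk. -/
def excessPhi {d : ℕ} (φ : ℝ → ℝ) (P : Measure ((Fin d → ℝ) × ℝ)) (f : (Fin d → ℝ) → ℝ) : ℝ :=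
  riskPhi φ P f - bayesPhi φ P

/-- A Borel probability measure on `[0,1]^d × {-1,1}`, presented by its input marginal `Q`
(a Borel probability measure concentrated on the cube) and its conditional class
probability function `η` (measurable, `[0,1]`-valued);  the measure itself is
`jointMeasure η Q`. -/
structure DataDist (d : ℕ) where
  η : (Fin d → ℝ) → ℝ
  Q : Measure (Fin d → ℝ)
  η_meas : Measurable η
  η_mem : ∀ x, η x ∈ Set.Icc (0 : ℝ) 1
  Q_prob : IsProbabilityMeasure Q
  Q_cube : Q (cube d) = 1

/-- The measure on `[0,1]^d × {-1,1}` associated with a `DataDist`. -/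
def DataDist.P {d : ℕ} (D : DataDist d) : Measure ((Fin d → ℝ) × ℝ) := jointMeasure D.η D.Q

/-- `x ^ s` for `s ∈ [0,∞]`, with the conventions `x ^ ∞ = 0` for `x < 1` and `1 ^ ∞ = 1`. -/
def rpowE (x : ℝ≥0∞) (s : ℝ≥0∞) : ℝ≥0∞ :=
  if s = ∞ then (if x < 1 then 0 else if x = 1 then 1 else ∞) else x ^ s.toReal

/-- The Tsybakov noise class `T^{d,s}_{α,τ}` (noise exponent `s ∈ [0,∞]`,
threshold `τ ∈ (0,∞]`). -/
def Tsybakov (d : ℕ) (s : ℝ≥0∞) (α : ℝ) (τ : ℝ≥0∞) : Set (DataDist d) :=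
  {P | ∀ t : ℝ, 0 < t → ENNReal.ofReal t ≤ τ →
    P.Q ({x | |2 * P.η x - 1| ≤ t} ∩ cube d) ≤ ENNReal.ofReal α * rpowE (ENNReal.ofReal t) s}

/-- The class `H^{d,β,r}_{q,K,dstar,dmax}`: distributions whose conditional class probability
agrees a.s. with a member of `G^CHOM`. -/
def HCHOM (d q K dstar dmax : ℕ) (β r : ℝ) : Set (DataDist d) :=
  {P | ∃ f ∈ GCHOM K dmax dstar β r q d, ∀ᵐ x ∂P.Q, P.η x = f x}

/-- `M_{Λ,d}`: Borel probability measures on `[0,1]^d` with a `[0,Λ]`-valued density with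
respect to Lebesgue measure. -/
def MLam (d : ℕ) (Λ : ℝ) : Set (Measure (Fin d → ℝ)) :=
  {Q | ∃ g : (Fin d → ℝ) → ℝ, Measurable g ∧ (∀ x, g x ∈ Set.Icc 0 Λ) ∧
    Q = (volume.restrict (cube d)).withDensity fun x => ENNReal.ofReal (g x)}

/-- The class `H^{d,β,r,Λ}_{q,K,dstar}`: joint laws `P_{η,Q}` with `η ∈ G^CH` (valued in
`[0,1]`) and `Q ∈ M_{Λ,d}`. -/
def HCHL (d q K dstar : ℕ) (β r Λ : ℝ) : Set (DataDist d) :=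
  {P | (∃ f ∈ GCH K dstar β r q d, (∀ x ∈ cube d, f x ∈ Set.Icc (0 : ℝ) 1) ∧
      ∀ᵐ x ∂P.Q, P.η x = f x) ∧ P.Q ∈ MLam d Λ}

/-- The class `H^{d,β,r}_{q,K,dstar}`: joint laws `P_{η,Q}` with `η ∈ G^CH` (valued in
`[0,1]`) and `Q` an arbitrary Borel probability measure on the cube. -/
def HCH (d q K dstar : ℕ) (β r : ℝ) : Set (DataDist d) :=
  {P | ∃ f ∈ GCH K dstar β r q d, (∀ x ∈ cube d, f x ∈ Set.Icc (0 : ℝ) 1) ∧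
    ∀ᵐ x ∂P.Q, P.η x = f x}

/-! ## Samples and estimators -/

/-- The law of an i.i.d. sample of size `n` from `μ`. -/
def iid {α : Type*} [MeasurableSpace α] (μ : Measure α) : (n : ℕ) → Measure (Fin n → α)
  | 0 => Measure.dirac fun i => i.elim0
  | n + 1 => (iid μ n).bind fun p => μ.map fun a => Fin.snoc p a

/-- An estimator: a rule assigning to each sample of size `n` a function `[0,1]^d → ℝ`. -/
def Estimator (d n : ℕ) := (Fin n → (Fin d → ℝ) × ℝ) → (Fin d → ℝ) → ℝ

/-- (Joint) measurability of an estimator. -/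
def Estimator.Meas {d n : ℕ} (A : Estimator d n) : Prop :=
  Measurable fun p : (Fin n → (Fin d → ℝ) × ℝ) × (Fin d → ℝ) => A p.1 p.2

/-- The expected excess 0-1 risk `E_{P^{⊗n}}[E_P(f̂_n)]` of an estimator. -/
def expectedExcess01 {d : ℕ} (P : Measure ((Fin d → ℝ) × ℝ)) {n : ℕ} (A : Estimator d n) : ℝ :=
  ∫ ω, excess01 P (A ω) ∂iid P n

/-- The covering number `N(F, γ)` (uniform norm over `Ω`), valued in `ℝ≥0∞`. -/
def coveringNumber {X : Type*} (Ω : Set X) (F : Set (X → ℝ)) (γ : ℝ) : ℝ≥0∞ :=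
  ⨅ (A : Finset (X → ℝ))
    (_ : ↑A ⊆ F ∧ ∀ f ∈ F, ∃ g ∈ A, ∀ x ∈ Ω, |f x - g x| ≤ γ),
    (A.card : ℝ≥0∞)

/-- `f` is an empirical `φ`-risk minimizer over `F` for the sample `ω`. -/
def IsERM {d n : ℕ} (φ : ℝ → ℝ) (F : Set ((Fin d → ℝ) → ℝ))
    (ω : Fin n → (Fin d → ℝ) × ℝ) (f : (Fin d → ℝ) → ℝ) : Prop :=
  f ∈ F ∧ ∀ g ∈ F,
    (n : ℝ)⁻¹ * ∑ i, φ ((ω i).2 * f ((ω i).1)) ≤ (n : ℝ)⁻¹ * ∑ i, φ ((ω i).2 * g ((ω i).1))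

/-! ## ReLU neural networks -/

/-- A feedforward ReLU network with input dimension `d`. -/
structure ReLUNet (d : ℕ) where
  L : ℕ
  width : ℕ → ℕ
  W : (i : ℕ) → Fin (width (i + 1)) → Fin (width i) → ℝ
  v : (i : ℕ) → Fin (width i) → ℝ
  h0 : width 0 = d
  hL : width (L + 1) = 1

/-- The `i`-th intermediate layer output `W_i σ_{v_i} ⋯ W_1 σ_{v_1} W_0 x`. -/
def ReLUNet.layer {d : ℕ} (net : ReLUNet d) (x : Fin (net.width 0) → ℝ) :
    (i : ℕ) → Fin (net.width (i + 1)) → ℝ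
  | 0 => fun j => ∑ k, net.W 0 j k * x k
  | i + 1 => fun j => ∑ k, net.W (i + 1) j k * max 0 (net.layer x i k - net.v (i + 1) k)

/-- The real-valued function computed by a ReLU network. -/
def ReLUNet.eval {d : ℕ} (net : ReLUNet d) (x : Fin d → ℝ) : ℝ :=
  net.layer (fun j => x (Fin.cast net.h0 j)) net.L (Fin.cast net.hL.symm 0)

/-- The class `F^NN_d(G, N, S, B, Fb)` of ReLU networks with depth `≤ G`, widths `≤ N`,
at most `S` nonzero parameters, parameter magnitudes `≤ B`, and uniform norm on the cube
`≤ Fb`. -/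
def FNN (d : ℕ) (G N : ℝ) (S : ℝ≥0∞) (B : ℝ) (Fb : ℝ≥0∞) : Set ((Fin d → ℝ) → ℝ) :=
  {f | ∃ net : ReLUNet d,
    (∀ x, f x = net.eval x) ∧
    (net.L : ℝ) ≤ G ∧
    (∀ i ≤ net.L + 1, (net.width i : ℝ) ≤ N) ∧
    ((∑ i ∈ Finset.range (net.L + 1),
        (Nat.card {p : Fin (net.width (i + 1)) × Fin (net.width i) // net.W i p.1 p.2 ≠ 0}
          : ℝ≥0∞)) +
      ∑ i ∈ Finset.range net.L,
        (Nat.card {j : Fin (net.width (i + 1)) // net.v (i + 1) j ≠ 0} : ℝ≥0∞)) ≤ S ∧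
    (∀ i ≤ net.L, ∀ j k, |net.W i j k| ≤ B) ∧
    (∀ i, 1 ≤ i → i ≤ net.L → ∀ j, |net.v i j| ≤ B) ∧
    ∀ x ∈ cube d, ENNReal.ofReal |f x| ≤ Fb}

/-! ## Kullback–Leibler divergence -/

open Classical in
/-- The Kullback–Leibler divergence. -/
def KL {X : Type*} [MeasurableSpace X] (P Q : Measure X) : ℝ≥0∞ :=
  if P ≪ Q ∧ Integrable (fun x => Real.log (P.rnDeriv Q x).toReal) P then
    ENNReal.ofReal (∫ x, Real.log (P.rnDeriv Q x).toReal ∂P)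
  else ∞

/-- The exponent `e / (dstar/(s+1) + (1 + 1/(s+1))·e)` of the minimax rate, for noise
exponent `s ∈ [0,∞]` (equal to `1` when `s = ∞`). -/
def rateExp (dstar : ℕ) (e : ℝ) (s : ℝ≥0∞) : ℝ :=
  if s = ∞ then 1
  else e / ((dstar : ℝ) / (s.toReal + 1) + (1 + 1 / (s.toReal + 1)) * e)

/-! ## Smooth functions of the first coordinate -/

theorem pderivList_comp_eval {m : ℕ} (i₀ : Fin m) (l : List (Fin m)) (ψ : ℝ → ℝ)
    (hψ : ContDiff ℝ (⊤ : ℕ∞) ψ) :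
    pderivList l (fun x => ψ (x i₀)) = (fun _ => 0) ∨
      pderivList l (fun x => ψ (x i₀)) = fun x => deriv^[l.length] ψ (x i₀) := by
  induction l generalizing ψ with
  | nil => right; rfl
  | cons i l ih =>
    have hd : ∀ x : Fin m → ℝ, fderiv ℝ (fun x : Fin m → ℝ => ψ (x i₀)) x (Pi.single i 1) =
        deriv ψ (x i₀) * (Pi.single i (1 : ℝ) : Fin m → ℝ) i₀ := by
      intro x
      have h1 : HasDerivAt ψ (deriv ψ (x i₀)) (x i₀) :=
        ((hψ.differentiable (by simp)) _).hasDerivAt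
      have h2 : HasFDerivAt (fun x : Fin m → ℝ => x i₀)
          (ContinuousLinearMap.proj (R := ℝ) (φ := fun _ : Fin m => ℝ) i₀) x :=
        (ContinuousLinearMap.proj (R := ℝ) (φ := fun _ : Fin m => ℝ) i₀).hasFDerivAt
      have h3 := h1.comp_hasFDerivAt x h2
      have h4 : fderiv ℝ (fun x : Fin m → ℝ => ψ (x i₀)) x = _ := h3.fderiv
      rw [h4]
      simp
    have hψ' : ContDiff ℝ (⊤ : ℕ∞) (deriv ψ) := (contDiff_infty_iff_deriv.1 hψ).2
    simp only [pderivList, hd]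
    by_cases hi : i = i₀
    · subst hi
      simpa using ih (deriv ψ) hψ'
    · left
      have h0 := ih (fun _ => 0) contDiff_const
      have hz : ∀ k : ℕ, deriv^[k] (fun _ : ℝ => (0 : ℝ)) = fun _ => 0 := by
        intro k
        induction k with
        | zero => rfl
        | succ k ihk => rw [Function.iterate_succ_apply', ihk]; simp
      simp only [hz, or_self] at h0
      simpa [Pi.single_eq_of_ne (Ne.symm hi)] using h0

theorem length_idxList {m : ℕ} (u : Fin m → ℕ) : (idxList u).length = mord u := by
  simp [idxList, mord, List.length_flatMap, List.sum_ofFn, ← List.ofFn_eq_map]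

theorem abs_sub_le_e2 {m : ℕ} (x z : Fin m → ℝ) (i : Fin m) : |x i - z i| ≤ e2 x z := by
  rw [← Real.sqrt_sq_eq_abs]
  exact Real.sqrt_le_sqrt (Finset.single_le_sum (f := fun i => (x i - z i) ^ 2)
    (fun j _ => sq_nonneg _) (Finset.mem_univ i))

theorem contDiff_iterate_deriv {ψ : ℝ → ℝ} (hψ : ContDiff ℝ (⊤ : ℕ∞) ψ) (k : ℕ) :
    ContDiff ℝ (⊤ : ℕ∞) (deriv^[k] ψ) := by
  induction k with
  | zero => exact hψ
  | succ k ih =>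
    rw [Function.iterate_succ_apply']
    exact (contDiff_infty_iff_deriv.1 ih).2

theorem exists_bound_iterate_deriv {ψ : ℝ → ℝ} (hψ : ContDiff ℝ (⊤ : ℕ∞) ψ) (N : ℕ) :
    ∃ C : ℝ, 0 < C ∧ ∀ k ≤ N, ∀ t ∈ Icc (0 : ℝ) 1, |deriv^[k] ψ t| ≤ C := by
  have hb : ∀ k, ∃ C : ℝ, ∀ t ∈ Icc (0 : ℝ) 1, |deriv^[k] ψ t| ≤ C := fun k =>
    isCompact_Icc.exists_bound_of_continuousOn
      (contDiff_iterate_deriv hψ k).continuous.continuousOn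
  choose C hC using hb
  refine ⟨1 + ∑ k ∈ Finset.range (N + 1), |C k|, by positivity, fun k hk t ht => ?_⟩
  have := Finset.single_le_sum (f := fun k => |C k|) (fun j _ => abs_nonneg _)
    (Finset.mem_range.2 (Nat.lt_succ_of_le hk))
  linarith [hC k t ht, le_abs_self (C k)]

theorem exists_forall_comp_eval_mem_holderBall (β : ℝ) {ψ : ℝ → ℝ}
    (hψ : ContDiff ℝ (⊤ : ℕ∞) ψ) :
    ∃ c : ℝ, ∀ r, c ≤ r → ∀ (m : ℕ) (i₀ : Fin m),
      (fun x => ψ (x i₀)) ∈ HolderBall m β r := by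
  obtain ⟨C, hC0, hC⟩ := exists_bound_iterate_deriv hψ ⌈β⌉₊
  have hmem : ∀ {m : ℕ} (i₀ : Fin m) {x : Fin m → ℝ}, x ∈ cubeo m → x i₀ ∈ Icc (0 : ℝ) 1 :=
    fun i₀ x hx => Ioo_subset_Icc_self (hx i₀ (mem_univ _))
  have hγ0 : 0 < β + 1 - (⌈β⌉ : ℝ) := by linarith [Int.ceil_lt_add_one β]
  have hγ1 : β + 1 - (⌈β⌉ : ℝ) ≤ 1 := by linarith [Int.le_ceil β]
  have hbound : ∀ {m : ℕ} (i₀ : Fin m) (u : Fin m → ℕ), (mord u : ℝ) < β → ∀ x ∈ cubeo m,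
      |Dm u (fun x => ψ (x i₀)) x| ≤ C := by
    intro m i₀ u hu x hx
    have hk : mord u ≤ ⌈β⌉₊ := (Nat.lt_ceil.2 hu).le
    rcases pderivList_comp_eval i₀ (idxList u) ψ hψ with h | h
    · simp [Dm, h, hC0.le]
    · simp only [Dm, h, length_idxList]
      exact hC _ hk _ (hmem i₀ hx)
  have hlip : ∀ {m : ℕ} (i₀ : Fin m) (u : Fin m → ℕ), (mord u : ℝ) < β → ∀ x ∈ cubeo m,
      ∀ z ∈ cubeo m,
      |Dm u (fun x => ψ (x i₀)) x - Dm u (fun x => ψ (x i₀)) z| ≤ C * |x i₀ - z i₀| := by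
    intro m i₀ u hu x hx z hz
    have hk : mord u + 1 ≤ ⌈β⌉₊ := Nat.lt_ceil.2 hu
    rcases pderivList_comp_eval i₀ (idxList u) ψ hψ with h | h
    · simp only [Dm, h, sub_self, abs_zero]; positivity
    · simp only [Dm, h, length_idxList]
      refine (convex_Icc (0 : ℝ) 1).norm_image_sub_le_of_norm_deriv_le (𝕜 := ℝ)
        (fun t _ => (contDiff_iterate_deriv hψ _).differentiable (by simp) t) (fun t ht => ?_)
        (hmem i₀ hz) (hmem i₀ hx)
      have := hC _ hk t ht
      rwa [Function.iterate_succ_apply'] at this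
  refine ⟨C + C, fun r hr m i₀ => ⟨?_, ?_, fun u hu => ?_, ?_⟩⟩
  · exact (hψ.continuous.comp (continuous_apply i₀)).continuousOn
  · have h1 : ContDiff ℝ (⊤ : ℕ∞) (fun x : Fin m → ℝ => ψ (x i₀)) := hψ.comp (contDiff_apply ℝ ℝ i₀)
    exact (h1.of_le (by exact_mod_cast le_top)).contDiffOn
  · refine LipschitzOnWith.uniformContinuousOn (K := C.toNNReal)
      (LipschitzOnWith.of_dist_le_mul fun x hx z hz => ?_)
    rw [Real.dist_eq, Real.coe_toNNReal _ hC0.le]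
    refine (hlip i₀ u hu x hx z hz).trans ?_
    gcongr
    exact dist_le_pi_dist x z i₀
  · refine le_trans ?_ (ENNReal.ofReal_le_ofReal hr)
    rw [ENNReal.ofReal_add hC0.le hC0.le]
    refine add_le_add ?_ ?_
    · exact iSup_le fun u => iSup_le fun hu => iSup_le fun x => iSup_le fun hx =>
        ENNReal.ofReal_le_ofReal (hbound i₀ u hu x hx)
    · refine iSup_le fun u => iSup_le fun hu => iSup_le fun x => iSup_le fun hx =>
        iSup_le fun z => iSup_le fun hz => iSup_le fun hxz => ?_
      refine ENNReal.div_le_of_le_mul ?_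
      have he : 0 ≤ e2 x z := Real.sqrt_nonneg _
      rw [ENNReal.ofReal_rpow_of_nonneg he hγ0.le, ← ENNReal.ofReal_mul hC0.le]
      refine ENNReal.ofReal_le_ofReal ((hlip i₀ u hu.2 x hx z hz).trans ?_)
      gcongr
      have h1 : |x i₀ - z i₀| ≤ 1 := by
        rw [abs_le]
        constructor <;> linarith [(hmem i₀ hx).1, (hmem i₀ hx).2, (hmem i₀ hz).1, (hmem i₀ hz).2]
      calc |x i₀ - z i₀| = |x i₀ - z i₀| ^ (1 : ℝ) := (Real.rpow_one _).symm
        _ ≤ |x i₀ - z i₀| ^ (β + 1 - (⌈β⌉ : ℝ)) :=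
          Real.rpow_le_rpow_of_exponent_ge' (abs_nonneg _) h1 hγ0.le hγ1
        _ ≤ e2 x z ^ (β + 1 - (⌈β⌉ : ℝ)) :=
          Real.rpow_le_rpow (abs_nonneg _) (abs_sub_le_e2 x z i₀) hγ0.le

theorem comp_eval_zero_mem_GH {m dstar : ℕ} (hm : 0 < m) (hs : 0 < dstar) (hle : dstar ≤ m)
    {β r : ℝ} {ψ : ℝ → ℝ} (h : ∀ (m : ℕ) (i₀ : Fin m), (fun x => ψ (x i₀)) ∈ HolderBall m β r) :
    (fun x : Fin m → ℝ => ψ (x ⟨0, hm⟩)) ∈ GH m dstar β r :=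
  ⟨Fin.castLE hle, fun y => ψ (y ⟨0, hs⟩), Fin.strictMono_castLE hle, h _ _, fun _ _ => rfl⟩

theorem comp_eval_zero_mem_GCH {K dstar : ℕ} (hK : 0 < K) (hs : 0 < dstar) {β r : ℝ}
    (hid : ∀ (m : ℕ) (i₀ : Fin m), (fun x => x i₀) ∈ HolderBall m β r) (q : ℕ) :
    dstar * q ≤ K * q → ∀ (d : ℕ) (hd : 0 < d), dstar ≤ d → ∀ ψ : ℝ → ℝ,
      (∀ t ∈ Icc (0 : ℝ) 1, ψ t ∈ Icc (0 : ℝ) 1) →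
      (∀ (m : ℕ) (i₀ : Fin m), (fun x => ψ (x i₀)) ∈ HolderBall m β r) →
      (fun x : Fin d → ℝ => ψ (x ⟨0, hd⟩)) ∈ GCH K dstar β r q d := by
  induction q with
  | zero =>
    intro _ d hd hle ψ _ h
    exact ⟨_, comp_eval_zero_mem_GH hd hs hle h, fun _ _ => rfl⟩
  | succ q ih =>
    intro hq d hd hle ψ hψ h
    have hsK : dstar ≤ K := Nat.le_of_mul_le_mul_right hq (Nat.succ_pos q)
    refine ⟨fun x _ => ψ (x ⟨0, hd⟩), fun y => y ⟨0, hK⟩,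
      fun _ => comp_eval_zero_mem_GH hd hs hle h, fun x hx j _ => hψ _ (hx _ (mem_univ _)),
      ih (Nat.mul_le_mul_right q hsK) K hK hsK (fun t => t) (fun t ht => ht) hid,
      fun _ _ => rfl⟩

/-! ## Joint laws and samples -/

theorem lintegral_jointMeasure {d : ℕ} {η : (Fin d → ℝ) → ℝ} (hη : Measurable η)
    (Q : Measure (Fin d → ℝ)) {F : (Fin d → ℝ) × ℝ → ℝ≥0∞} (hF : Measurable F) :
    ∫⁻ p, F p ∂jointMeasure η Q =
      ∫⁻ x, (ENNReal.ofReal (η x) * F (x, 1) + ENNReal.ofReal (1 - η x) * F (x, -1)) ∂Q := by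
  have hm : Measurable fun x : Fin d → ℝ =>
      ENNReal.ofReal (η x) • Measure.dirac (x, (1 : ℝ)) +
        ENNReal.ofReal (1 - η x) • Measure.dirac (x, (-1 : ℝ)) := by
    refine Measure.measurable_of_measurable_coe _ fun s hs => ?_
    simp only [Measure.coe_add, Pi.add_apply, Measure.smul_apply, smul_eq_mul,
      Measure.dirac_apply' _ hs]
    have h1 : ∀ y : ℝ, Measurable fun x : Fin d → ℝ => s.indicator (1 : (Fin d → ℝ) × ℝ → ℝ≥0∞) (x, y) :=
      fun y => (measurable_one.indicator hs).comp measurable_prodMk_right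
    exact ((hη.ennreal_ofReal).mul (h1 1)).add
      (((measurable_const.sub hη).ennreal_ofReal).mul (h1 (-1)))
  rw [jointMeasure, Measure.lintegral_bind hm.aemeasurable hF.aemeasurable]
  simp [lintegral_dirac' _ hF]

theorem jointMeasure_apply {d : ℕ} {η : (Fin d → ℝ) → ℝ} (hη : Measurable η)
    (Q : Measure (Fin d → ℝ)) {s : Set ((Fin d → ℝ) × ℝ)} (hs : MeasurableSet s) :
    jointMeasure η Q s = ∫⁻ x, (ENNReal.ofReal (η x) * s.indicator 1 (x, 1) +
      ENNReal.ofReal (1 - η x) * s.indicator 1 (x, -1)) ∂Q := by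
  rw [← lintegral_jointMeasure hη Q (measurable_one.indicator hs), lintegral_indicator_one hs]

theorem DataDist.isProbabilityMeasure_P {d : ℕ} (D : DataDist d) : IsProbabilityMeasure D.P := by
  have := D.Q_prob
  constructor
  rw [DataDist.P, jointMeasure_apply D.η_meas _ MeasurableSet.univ]
  have : ∀ x, ENNReal.ofReal (D.η x) + ENNReal.ofReal (1 - D.η x) = 1 := fun x => by
    rw [← ENNReal.ofReal_add (D.η_mem x).1 (by linarith [(D.η_mem x).2])]
    simp
  simp [this]

theorem measurable_snoc (α : Type*) [MeasurableSpace α] (n : ℕ) :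
    Measurable fun z : (Fin n → α) × α => Fin.snoc (α := fun _ => α) z.1 z.2 := by
  refine measurable_pi_lambda _ fun i => ?_
  refine Fin.lastCases ?_ (fun j => ?_) i
  · simpa using measurable_snd
  · simp only [Fin.snoc_castSucc]
    exact (measurable_pi_apply j).comp measurable_fst

theorem lintegral_iid_succ {α : Type*} [MeasurableSpace α] (μ : Measure α) [IsFiniteMeasure μ]
    (n : ℕ) {F : (Fin (n + 1) → α) → ℝ≥0∞} (hF : Measurable F) :
    ∫⁻ ω, F ω ∂iid μ (n + 1) =
      ∫⁻ p, ∫⁻ a, F (Fin.snoc (α := fun _ => α) p a) ∂μ ∂iid μ n := by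
  have hs := measurable_snoc α n
  have hs' : ∀ p : Fin n → α, Measurable fun a : α => Fin.snoc (α := fun _ => α) p a :=
    fun p => hs.comp measurable_prodMk_left
  have hm : Measurable fun p : Fin n → α => μ.map fun a => Fin.snoc (α := fun _ => α) p a := by
    refine Measure.measurable_of_measurable_coe _ fun s hsm => ?_
    simp only [fun p => Measure.map_apply (μ := μ) (hs' p) hsm]
    exact measurable_measure_prodMk_left (hs hsm)
  rw [iid, Measure.lintegral_bind hm.aemeasurable hF.aemeasurable]
  simp only [fun p => lintegral_map (μ := μ) hF (hs' p)]

theorem measurable_lintegral_snoc {α : Type*} [MeasurableSpace α] (μ : Measure α)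
    [IsFiniteMeasure μ] {n : ℕ} {F : (Fin (n + 1) → α) → ℝ≥0∞} (hF : Measurable F) :
    Measurable fun p : Fin n → α => ∫⁻ a, F (Fin.snoc (α := fun _ => α) p a) ∂μ := by
  exact (hF.comp (measurable_snoc α n)).lintegral_prod_right'

theorem lintegral_iid_mono {α : Type*} [MeasurableSpace α] {ν μ : Measure α} [IsFiniteMeasure ν]
    [IsFiniteMeasure μ] (h : ν ≤ μ) (n : ℕ) {F : (Fin n → α) → ℝ≥0∞} (hF : Measurable F) :
    ∫⁻ ω, F ω ∂iid ν n ≤ ∫⁻ ω, F ω ∂iid μ n := by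
  induction n with
  | zero => exact le_rfl
  | succ n ih =>
    rw [lintegral_iid_succ ν n hF, lintegral_iid_succ μ n hF]
    exact (ih (measurable_lintegral_snoc ν hF)).trans
      (lintegral_mono fun p => lintegral_mono' h le_rfl)

theorem iid_univ {α : Type*} [MeasurableSpace α] (μ : Measure α) [IsFiniteMeasure μ] (n : ℕ) :
    iid μ n univ = μ univ ^ n := by
  induction n with
  | zero => simp [iid]
  | succ n ih =>
    have := lintegral_iid_succ μ n (F := fun _ => 1) measurable_const
    simp only [lintegral_const, one_mul] at this
    rw [this, ih, pow_succ']

/-! ## Risks -/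

theorem measurable_sgn : Measurable sgn :=
  Measurable.ite measurableSet_Ici measurable_const measurable_const

theorem risk01_mem_Icc {d : ℕ} (P : Measure ((Fin d → ℝ) × ℝ)) [IsProbabilityMeasure P]
    (f : (Fin d → ℝ) → ℝ) : risk01 P f ∈ Icc (0 : ℝ) 1 :=
  ⟨ENNReal.toReal_nonneg, measureReal_le_one⟩

theorem bddBelow_range_risk01 {d : ℕ} (P : Measure ((Fin d → ℝ) × ℝ)) [IsProbabilityMeasure P] :
    BddBelow (range fun g : {g : (Fin d → ℝ) → ℝ // Measurable g} => risk01 P g.1) :=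
  ⟨0, by rintro _ ⟨g, rfl⟩; exact (risk01_mem_Icc P g.1).1⟩

theorem bayes01_mem_Icc {d : ℕ} (P : Measure ((Fin d → ℝ) × ℝ)) [IsProbabilityMeasure P] :
    bayes01 P ∈ Icc (0 : ℝ) 1 :=
  ⟨Real.iInf_nonneg fun g => (risk01_mem_Icc P g.1).1,
    (ciInf_le (bddBelow_range_risk01 P) ⟨fun _ => 0, measurable_const⟩).trans
      (risk01_mem_Icc P _).2⟩

theorem bayes01_eq_zero {d : ℕ} (P : Measure ((Fin d → ℝ) × ℝ)) [IsProbabilityMeasure P]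
    {g : (Fin d → ℝ) → ℝ} (hg : Measurable g) (h : P {p | sgn (g p.1) ≠ p.2} = 0) :
    bayes01 P = 0 := by
  refine le_antisymm ?_ (bayes01_mem_Icc P).1
  refine (ciInf_le (bddBelow_range_risk01 P) ⟨g, hg⟩).trans ?_
  simp [risk01, h]

theorem expectedExcess01_le_one {d n : ℕ} (P : Measure ((Fin d → ℝ) × ℝ))
    [IsProbabilityMeasure P] (A : Estimator d n) : expectedExcess01 P A ≤ 1 := by
  have h1 : iid P n univ = 1 := by rw [iid_univ]; simp
  have : IsProbabilityMeasure (iid P n) := ⟨h1⟩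
  refine (le_abs_self _).trans ?_
  have := norm_integral_le_of_norm_le_const (μ := iid P n) (f := fun ω => excess01 P (A ω))
    (C := 1) (Filter.Eventually.of_forall fun ω => ?_)
  · simpa [expectedExcess01] using this
  · have h2 := risk01_mem_Icc P (A ω)
    have h3 := bayes01_mem_Icc P
    rw [Real.norm_eq_abs, excess01, abs_le]
    constructor <;> linarith [h2.1, h2.2, h3.1, h3.2]

theorem measurableSet_misclassified {d n : ℕ} {A : Estimator d n} (hA : A.Meas) :
    MeasurableSet {z : (Fin n → (Fin d → ℝ) × ℝ) × ((Fin d → ℝ) × ℝ) |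
      sgn (A z.1 z.2.1) ≠ z.2.2} := by
  have h1 : Measurable fun z : (Fin n → (Fin d → ℝ) × ℝ) × ((Fin d → ℝ) × ℝ) =>
      sgn (A z.1 z.2.1) :=
    measurable_sgn.comp (hA.comp (measurable_fst.prodMk (measurable_fst.comp measurable_snd)))
  exact (measurableSet_eq_fun h1 (measurable_snd.comp measurable_snd)).compl

theorem measurable_measure_misclassified {d n : ℕ} {A : Estimator d n} (hA : A.Meas)
    (P : Measure ((Fin d → ℝ) × ℝ)) [IsFiniteMeasure P] :
    Measurable fun ω => P {p | sgn (A ω p.1) ≠ p.2} :=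
  measurable_measure_prodMk_left (measurableSet_misclassified hA)

theorem ofReal_expectedExcess01 {d n : ℕ} (P : Measure ((Fin d → ℝ) × ℝ))
    [IsProbabilityMeasure P] {A : Estimator d n} (hA : A.Meas) (hb : bayes01 P = 0) :
    ENNReal.ofReal (expectedExcess01 P A) = ∫⁻ ω, P {p | sgn (A ω p.1) ≠ p.2} ∂iid P n := by
  have h1 : iid P n univ = 1 := by rw [iid_univ]; simp
  have hfin : ∫⁻ ω, P {p | sgn (A ω p.1) ≠ p.2} ∂iid P n ≠ ∞ := by
    refine ((lintegral_mono (g := fun _ => 1) fun ω => prob_le_one).trans_lt ?_).ne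
    simp [h1]
  simp only [expectedExcess01, excess01, risk01, hb, sub_zero]
  rw [integral_toReal (measurable_measure_misclassified hA P).aemeasurable
    (Filter.Eventually.of_forall fun ω => measure_lt_top _ _), ENNReal.ofReal_toReal hfin]

/-- The two-point bound of Le Cam, with a common minorant `ν` in place of a total variation bound. -/
theorem two_point_lower_bound {d n : ℕ} {P₀ P₁ ν : Measure ((Fin d → ℝ) × ℝ)}
    [IsProbabilityMeasure P₀] [IsProbabilityMeasure P₁] [IsFiniteMeasure ν]
    (h₀ : ν ≤ P₀) (h₁ : ν ≤ P₁) (hb₀ : bayes01 P₀ = 0) (hb₁ : bayes01 P₁ = 0) {δ : ℝ≥0∞}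
    (hsep : ∀ f : (Fin d → ℝ) → ℝ, Measurable f →
      δ ≤ P₀ {p | sgn (f p.1) ≠ p.2} + P₁ {p | sgn (f p.1) ≠ p.2})
    {A : Estimator d n} (hA : A.Meas) :
    δ * ν univ ^ n ≤
      ENNReal.ofReal (expectedExcess01 P₀ A) + ENNReal.ofReal (expectedExcess01 P₁ A) := by
  rw [ofReal_expectedExcess01 P₀ hA hb₀, ofReal_expectedExcess01 P₁ hA hb₁]
  calc δ * ν univ ^ n = ∫⁻ _, δ ∂iid ν n := by rw [lintegral_const, iid_univ]
    _ ≤ ∫⁻ ω, (P₀ {p | sgn (A ω p.1) ≠ p.2} + P₁ {p | sgn (A ω p.1) ≠ p.2}) ∂iid ν n :=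
      lintegral_mono fun ω => hsep _ (hA.comp measurable_prodMk_left)
    _ = _ := lintegral_add_left (measurable_measure_misclassified hA P₀) _
    _ ≤ _ := add_le_add (lintegral_iid_mono h₀ n (measurable_measure_misclassified hA P₀))
      (lintegral_iid_mono h₁ n (measurable_measure_misclassified hA P₁))

/-! ## Two separated regions -/

/-- Mass `p` spread uniformly over `x₀ ∈ [0, a]` and `1 - p` over `x₀ ∈ [b, 1]`. -/
def twoRegion {d : ℕ} (hd : 0 < d) (a b p : ℝ) : Measure (Fin d → ℝ) :=
  ENNReal.ofReal (p / a) •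
      (volume.restrict (cube d)).restrict {x : Fin d → ℝ | x ⟨0, hd⟩ ≤ a} +
    ENNReal.ofReal ((1 - p) / (1 - b)) •
      (volume.restrict (cube d)).restrict {x : Fin d → ℝ | b ≤ x ⟨0, hd⟩}

theorem measurableSet_cube (d : ℕ) : MeasurableSet (cube d) :=
  MeasurableSet.univ_pi fun _ => measurableSet_Icc

theorem restrict_cube_preimage_eval {d : ℕ} (i : Fin d) {s : Set ℝ} (hs : MeasurableSet s) :
    (volume.restrict (cube d)) {x : Fin d → ℝ | x i ∈ s} = volume (s ∩ Icc 0 1) := by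
  have : IsProbabilityMeasure ((volume : Measure ℝ).restrict (Icc 0 1)) := ⟨by simp⟩
  have h : (volume : Measure (Fin d → ℝ)).restrict (cube d) =
      Measure.pi fun _ => (volume : Measure ℝ).restrict (Icc 0 1) := by
    rw [cube, volume_pi, Measure.restrict_pi_pi]
  have h2 := (measurePreserving_eval
    (fun _ : Fin d => (volume : Measure ℝ).restrict (Icc 0 1)) i).measure_preimage
    hs.nullMeasurableSet
  rw [h, ← Measure.restrict_apply hs]
  exact h2

section TwoRegion

variable {d : ℕ} (hd : 0 < d) {a b p : ℝ}

theorem measurableSet_left (a : ℝ) : MeasurableSet {x : Fin d → ℝ | x ⟨0, hd⟩ ≤ a} :=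
  measurableSet_le (measurable_pi_apply _) measurable_const

theorem measurableSet_right (b : ℝ) : MeasurableSet {x : Fin d → ℝ | b ≤ x ⟨0, hd⟩} :=
  measurableSet_le measurable_const (measurable_pi_apply _)

theorem restrict_cube_left (ha1 : a ≤ 1) :
    (volume.restrict (cube d)) {x : Fin d → ℝ | x ⟨0, hd⟩ ≤ a} = ENNReal.ofReal a := by
  have := restrict_cube_preimage_eval (⟨0, hd⟩ : Fin d) (measurableSet_Iic (a := a))
  have h2 : Iic a ∩ Icc 0 1 = Icc 0 a := by
    ext t; simp only [mem_inter_iff, mem_Iic, mem_Icc]; constructor <;> grind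
  rw [h2, Real.volume_Icc, sub_zero] at this
  exact this

theorem restrict_cube_right (hb0 : 0 ≤ b) :
    (volume.restrict (cube d)) {x : Fin d → ℝ | b ≤ x ⟨0, hd⟩} = ENNReal.ofReal (1 - b) := by
  have := restrict_cube_preimage_eval (⟨0, hd⟩ : Fin d) (measurableSet_Ici (a := b))
  have h2 : Ici b ∩ Icc 0 1 = Icc b 1 := by
    ext t; simp only [mem_inter_iff, mem_Ici, mem_Icc]; constructor <;> grind
  rw [h2, Real.volume_Icc] at this
  exact this

theorem isProbabilityMeasure_twoRegion (ha0 : 0 < a) (hab : a < b) (hb1 : b < 1)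
    (hp0 : 0 ≤ p) (hp1 : p ≤ 1) : IsProbabilityMeasure (twoRegion hd a b p) := by
  constructor
  have h1 : 0 < 1 - b := by linarith
  have h2 : 0 ≤ 1 - p := by linarith
  simp only [twoRegion, Measure.coe_add, Pi.add_apply, Measure.smul_apply, smul_eq_mul,
    Measure.restrict_apply_univ]
  rw [restrict_cube_left hd (by linarith), restrict_cube_right hd (by linarith),
    ← ENNReal.ofReal_mul (by positivity), ← ENNReal.ofReal_mul (by positivity),
    ← ENNReal.ofReal_add (by positivity) (by positivity)]
  rw [div_mul_cancel₀ _ ha0.ne', div_mul_cancel₀ _ h1.ne']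
  simp

theorem ae_twoRegion_cube : ∀ᵐ x ∂twoRegion hd a b p, x ∈ cube d := by
  have h : ∀ᵐ x ∂(volume.restrict (cube d)), x ∈ cube d :=
    ae_restrict_mem (measurableSet_cube d)
  refine ae_add_measure_iff.2 ⟨?_, ?_⟩ <;>
    exact Measure.ae_smul_measure (ae_restrict_of_ae h) _

theorem ae_twoRegion_region : ∀ᵐ x ∂twoRegion hd a b p, x ⟨0, hd⟩ ≤ a ∨ b ≤ x ⟨0, hd⟩ := by
  refine ae_add_measure_iff.2 ⟨?_, ?_⟩
  · refine Measure.ae_smul_measure ?_ _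
    filter_upwards [ae_restrict_mem (measurableSet_left hd a)] with x hx using Or.inl hx
  · refine Measure.ae_smul_measure ?_ _
    filter_upwards [ae_restrict_mem (measurableSet_right hd b)] with x hx using Or.inr hx

theorem twoRegion_mem_MLam {Λ : ℝ} (ha0 : 0 < a) (hab : a < b) (hb1 : b < 1)
    (hp0 : 0 ≤ p) (hp1 : p ≤ 1) (hl : p / a ≤ Λ) (hr : (1 - p) / (1 - b) ≤ Λ) :
    twoRegion hd a b p ∈ MLam d Λ := by
  have h1 : 0 < 1 - b := by linarith
  have h2 : 0 ≤ 1 - p := by linarith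
  have h3 : 0 ≤ p / a := by positivity
  have h4 : 0 ≤ (1 - p) / (1 - b) := by positivity
  have hl' := measurableSet_left hd a
  have hr' := measurableSet_right hd b
  refine ⟨fun x => {x : Fin d → ℝ | x ⟨0, hd⟩ ≤ a}.indicator (fun _ => p / a) x +
    {x : Fin d → ℝ | b ≤ x ⟨0, hd⟩}.indicator (fun _ => (1 - p) / (1 - b)) x,
    (measurable_const.indicator hl').add (measurable_const.indicator hr'), fun x => ?_, ?_⟩
  · simp only [indicator_apply, mem_ofPred_eq, mem_Icc]
    split_ifs <;> constructor <;> linarith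
  · have : (fun x : Fin d → ℝ => ENNReal.ofReal
        ({x : Fin d → ℝ | x ⟨0, hd⟩ ≤ a}.indicator (fun _ => p / a) x +
        {x : Fin d → ℝ | b ≤ x ⟨0, hd⟩}.indicator (fun _ => (1 - p) / (1 - b)) x)) =
        {x : Fin d → ℝ | x ⟨0, hd⟩ ≤ a}.indicator (fun _ => ENNReal.ofReal (p / a)) +
        {x : Fin d → ℝ | b ≤ x ⟨0, hd⟩}.indicator
          (fun _ => ENNReal.ofReal ((1 - p) / (1 - b))) := by
      funext x
      simp only [indicator_apply, mem_ofPred_eq, Pi.add_apply]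
      split_ifs
      · exact ENNReal.ofReal_add h3 h4
      all_goals simp
    rw [this, withDensity_add_left (measurable_const.indicator hl'), withDensity_indicator hl',
      withDensity_indicator hr', withDensity_const, withDensity_const, twoRegion]

/-- The law with marginal `twoRegion` whose class probability is `ψ` of the first coordinate. -/
def twoRegionDist (ha0 : 0 < a) (hab : a < b) (hb1 : b < 1) (hp0 : 0 ≤ p) (hp1 : p ≤ 1)
    (ψ : ℝ → ℝ) (hψ : Measurable ψ) (hψ01 : ∀ t, ψ t ∈ Icc (0 : ℝ) 1) : DataDist d where
  η x := ψ (x ⟨0, hd⟩)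
  Q := twoRegion hd a b p
  η_meas := hψ.comp (measurable_pi_apply _)
  η_mem _ := hψ01 _
  Q_prob := isProbabilityMeasure_twoRegion hd ha0 hab hb1 hp0 hp1
  Q_cube := by
    have := isProbabilityMeasure_twoRegion hd ha0 hab hb1 hp0 hp1
    exact (prob_compl_eq_zero_iff (measurableSet_cube d)).1 (ae_twoRegion_cube hd)

end TwoRegion

theorem mem_Tsybakov_top {d : ℕ} (D : DataDist d) (hη : ∀ᵐ x ∂D.Q, D.η x = 0 ∨ D.η x = 1)
    {α : ℝ} (hα : 0 < α) {τ : ℝ≥0∞} (h : ¬(α < 1 ∧ 1 ≤ τ)) : D ∈ Tsybakov d ∞ α τ := by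
  intro t ht htτ
  have := D.Q_prob
  rcases lt_trichotomy t 1 with h1 | rfl | h1
  · refine (le_of_eq ?_).trans zero_le
    refine measure_mono_null inter_subset_left ?_
    have : ∀ᵐ x ∂D.Q, ¬ |2 * D.η x - 1| ≤ t := by
      filter_upwards [hη] with x hx
      rcases hx with hx | hx <;> rw [hx] <;> norm_num <;> exact h1
    simpa [ae_iff] using this
  · have hα1 : 1 ≤ α := by
      by_contra hlt
      exact h ⟨not_le.1 hlt, by simpa using htτ⟩
    refine prob_le_one.trans ?_
    simpa [rpowE] using hα1
  · have h2 : 1 < ENNReal.ofReal t := by simpa using h1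
    simp [rpowE, h2.not_gt, h2.ne', hα]

theorem bayes01_eq_zero_of_ae {d : ℕ} (D : DataDist d)
    (hη : ∀ᵐ x ∂D.Q, D.η x = 0 ∨ D.η x = 1) : bayes01 D.P = 0 := by
  have := D.isProbabilityMeasure_P
  have hg : Measurable fun x => 2 * D.η x - 1 := (D.η_meas.const_mul 2).sub_const 1
  refine bayes01_eq_zero D.P hg ?_
  have hs : MeasurableSet {p : (Fin d → ℝ) × ℝ | sgn (2 * D.η p.1 - 1) ≠ p.2} :=
    (measurableSet_eq_fun (measurable_sgn.comp (hg.comp measurable_fst)) measurable_snd).compl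
  rw [DataDist.P, jointMeasure_apply D.η_meas _ hs]
  refine lintegral_eq_zero_of_ae_eq_zero ?_
  filter_upwards [hη] with x hx
  rcases hx with hx | hx <;> norm_num [hx, sgn, indicator_apply]

theorem half_le_one_sub_pow {n : ℕ} (hn : 0 < n) : (1 / 2 : ℝ) ≤ (1 - 1 / (2 * n)) ^ n := by
  have hn' : (1 : ℝ) ≤ n := by exact_mod_cast hn
  have h := one_add_mul_le_pow (a := -(1 / (2 * (n : ℝ)))) (by
    have : 1 / (2 * (n : ℝ)) ≤ 1 := by rw [div_le_one (by positivity)]; linarith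
    linarith) n
  rw [← sub_eq_add_neg] at h
  refine le_trans (le_of_eq ?_) h
  field_simp
  norm_num

/-- The smooth transition from `0` on `(-∞, a]` to `1` on `[b, ∞)`. -/
def ramp (a b t : ℝ) : ℝ := Real.smoothTransition ((t - a) / (b - a))

theorem contDiff_ramp (a b : ℝ) : ContDiff ℝ (⊤ : ℕ∞) (ramp a b) :=
  Real.smoothTransition.contDiff.comp ((contDiff_id.sub contDiff_const).div_const _)

theorem ramp_mem_Icc (a b t : ℝ) : ramp a b t ∈ Icc (0 : ℝ) 1 :=
  ⟨Real.smoothTransition.nonneg _, Real.smoothTransition.le_one _⟩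

theorem ramp_of_le {a b t : ℝ} (hab : a < b) (ht : t ≤ a) : ramp a b t = 0 :=
  Real.smoothTransition.zero_of_nonpos
    (div_nonpos_of_nonpos_of_nonneg (by linarith) (by linarith))

theorem ramp_of_ge {a b t : ℝ} (hab : a < b) (ht : b ≤ t) : ramp a b t = 1 :=
  Real.smoothTransition.one_of_one_le ((one_le_div (by linarith)).2 (by linarith))

theorem twoRegion_minimax {d n : ℕ} (hd : 0 < d) {a b p : ℝ} (ha0 : 0 < a) (hab : a < b)
    (hb1 : b < 1) (hp0 : 0 ≤ p) (hp1 : p ≤ 1) {D₀ D₁ : DataDist d}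
    (hQ₀ : D₀.Q = twoRegion hd a b p) (hQ₁ : D₁.Q = twoRegion hd a b p)
    (hη₀ : ∀ x, D₀.η x = 1) (hη₁ : ∀ x, D₁.η x = ramp a b (x ⟨0, hd⟩))
    {A : Estimator d n} (hA : A.Meas) :
    ENNReal.ofReal p * ENNReal.ofReal (1 - p) ^ n ≤
      ENNReal.ofReal (expectedExcess01 D₀.P A) + ENNReal.ofReal (expectedExcess01 D₁.P A) := by
  have := D₀.isProbabilityMeasure_P
  have := D₁.isProbabilityMeasure_P
  have h1 : 0 < 1 - b := by linarith
  have h2 : 0 ≤ 1 - p := by linarith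
  set κ : Measure (Fin d → ℝ) := ENNReal.ofReal ((1 - p) / (1 - b)) •
      (volume.restrict (cube d)).restrict {x : Fin d → ℝ | b ≤ x ⟨0, hd⟩} with hκ
  set ν : Measure ((Fin d → ℝ) × ℝ) := κ.map fun x => (x, (1 : ℝ)) with hν
  have hmk : Measurable fun x : Fin d → ℝ => (x, (1 : ℝ)) := measurable_prodMk_right
  have hνu : ν univ = ENNReal.ofReal (1 - p) := by
    rw [hν, Measure.map_apply hmk MeasurableSet.univ, preimage_univ, hκ, Measure.smul_apply,
      smul_eq_mul, Measure.restrict_apply_univ, restrict_cube_right hd (by linarith),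
      ← ENNReal.ofReal_mul (by positivity), div_mul_cancel₀ _ h1.ne']
  have : IsFiniteMeasure ν := ⟨by rw [hνu]; exact ENNReal.ofReal_lt_top⟩
  have hκb : ∀ᵐ x ∂κ, b ≤ x ⟨0, hd⟩ :=
    Measure.ae_smul_measure (ae_restrict_mem (measurableSet_right hd b)) _
  have hκQ : κ ≤ twoRegion hd a b p := Measure.le_add_left le_rfl
  have hle : ∀ D : DataDist d, D.Q = twoRegion hd a b p →
      (∀ x : Fin d → ℝ, b ≤ x ⟨0, hd⟩ → D.η x = 1) → ν ≤ D.P := by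
    intro D hQ hη
    refine Measure.le_iff.2 fun s hs => ?_
    rw [DataDist.P, jointMeasure_apply D.η_meas _ hs, hQ]
    refine le_trans (le_of_eq ?_) (lintegral_mono' hκQ le_rfl)
    rw [hν, Measure.map_apply hmk hs, ← lintegral_indicator_one (hmk hs)]
    refine lintegral_congr_ae ?_
    filter_upwards [hκb] with x hx
    simp only [hη x hx, ofReal_one, one_mul, sub_self, ofReal_zero, zero_mul, add_zero]
    rfl
  have hη₁b : ∀ x : Fin d → ℝ, b ≤ x ⟨0, hd⟩ → D₁.η x = 1 := fun x hx => by
    rw [hη₁, ramp_of_ge hab hx]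
  have hη₁a : ∀ x : Fin d → ℝ, x ⟨0, hd⟩ ≤ a → D₁.η x = 0 := fun x hx => by
    rw [hη₁, ramp_of_le hab hx]
  have hb₀ : bayes01 D₀.P = 0 :=
    bayes01_eq_zero_of_ae D₀ (Filter.Eventually.of_forall fun x => Or.inr (hη₀ x))
  have hb₁ : bayes01 D₁.P = 0 := by
    refine bayes01_eq_zero_of_ae D₁ ?_
    rw [hQ₁]
    filter_upwards [ae_twoRegion_region hd] with x hx
    exact hx.imp (hη₁a x) (hη₁b x)
  rw [← hνu]
  refine two_point_lower_bound (hle D₀ hQ₀ fun x _ => hη₀ x) (hle D₁ hQ₁ hη₁b) hb₀ hb₁ ?_ hA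
  intro f hf
  have hs : MeasurableSet {p : (Fin d → ℝ) × ℝ | sgn (f p.1) ≠ p.2} :=
    (measurableSet_eq_fun (measurable_sgn.comp (hf.comp measurable_fst)) measurable_snd).compl
  have hlow : ENNReal.ofReal p = ∫⁻ _, 1 ∂(ENNReal.ofReal (p / a) •
      (volume.restrict (cube d)).restrict {x : Fin d → ℝ | x ⟨0, hd⟩ ≤ a}) := by
    rw [lintegral_one, Measure.smul_apply, smul_eq_mul, Measure.restrict_apply_univ,
      restrict_cube_left hd (by linarith), ← ENNReal.ofReal_mul (by positivity),
      div_mul_cancel₀ _ ha0.ne']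
  have hi : ∀ y : ℝ, Measurable fun x : Fin d → ℝ =>
      {p : (Fin d → ℝ) × ℝ | sgn (f p.1) ≠ p.2}.indicator (1 : (Fin d → ℝ) × ℝ → ℝ≥0∞) (x, y) :=
    fun y => (measurable_one.indicator hs).comp measurable_prodMk_right
  have hm₀ : Measurable fun x : Fin d → ℝ =>
      ENNReal.ofReal (D₀.η x) *
          {p : (Fin d → ℝ) × ℝ | sgn (f p.1) ≠ p.2}.indicator (1 : (Fin d → ℝ) × ℝ → ℝ≥0∞) (x, 1) +
        ENNReal.ofReal (1 - D₀.η x) *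
          {p : (Fin d → ℝ) × ℝ | sgn (f p.1) ≠ p.2}.indicator (1 : (Fin d → ℝ) × ℝ → ℝ≥0∞) (x, -1) :=
    ((D₀.η_meas.ennreal_ofReal).mul (hi 1)).add
      (((measurable_const.sub D₀.η_meas).ennreal_ofReal).mul (hi (-1)))
  rw [DataDist.P, DataDist.P, jointMeasure_apply D₀.η_meas _ hs,
    jointMeasure_apply D₁.η_meas _ hs, hQ₀, hQ₁, ← lintegral_add_left hm₀, hlow]
  refine le_trans (lintegral_mono_ae ?_) (lintegral_mono' (Measure.le_add_right le_rfl) le_rfl)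
  refine Measure.ae_smul_measure ?_ _
  filter_upwards [ae_restrict_mem (measurableSet_left hd a)] with x hx
  rw [hη₀, hη₁a x hx]
  simp only [indicator_apply, mem_ofPred_eq, sgn]
  split_ifs <;> norm_num at *

/-- Theorem 6.2 : minimax lower bound for `s = ∞`. -/
theorem statement_8
    (β Λ : ℝ) (hβ : 0 < β) (hΛ : 1 < Λ) :
    ∃ c : ℝ, 0 < c ∧
      ∀ (q d dstar K : ℕ), 0 < d → 0 < dstar → 0 < K →
        ∀ (α : ℝ), 0 < α → ∀ (τ : ℝ≥0∞), 0 < τ →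
        dstar * q ≤ K * q → dstar ≤ d → ¬(α < 1 ∧ 1 ≤ τ) →
        ∀ (r : ℝ), c ≤ r → ∀ (n : ℕ), 1 / (Λ - 1) ≤ (n : ℝ) →
        (⨅ A : {A : Estimator d n // A.Meas},
            ⨆ D : ↥(HCHL d q K dstar β r Λ ∩ Tsybakov d ∞ α τ),
              expectedExcess01 D.1.P A.1) ≥ 1 / (32 * n) := by
  set a : ℝ := (1 - 1 / Λ) / 2 with ha
  set b : ℝ := 1 - 1 / Λ with hb
  have hΛ0 : 0 < Λ := by linarith
  have hinv : 1 / Λ < 1 := (div_lt_one hΛ0).2 hΛ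
  have hinv0 : 0 < 1 / Λ := by positivity
  have ha0 : 0 < a := by rw [ha]; linarith
  have hab : a < b := by rw [ha, hb]; linarith
  have hb1 : b < 1 := by rw [hb]; linarith
  obtain ⟨c₀, hc₀⟩ := exists_forall_comp_eval_mem_holderBall β (ψ := fun t => t) contDiff_id
  obtain ⟨c₁, hc₁⟩ := exists_forall_comp_eval_mem_holderBall β (ψ := fun _ => 1) contDiff_const
  obtain ⟨c₂, hc₂⟩ := exists_forall_comp_eval_mem_holderBall β (contDiff_ramp a b)
  refine ⟨max 1 (max c₀ (max c₁ c₂)), by positivity, ?_⟩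
  intro q d dstar K hd hs hK α hα τ _ hq hsd hατ r hr n hn
  have hr₀ : c₀ ≤ r := le_trans (by simp) hr
  have hr₁ : c₁ ≤ r := le_trans (by simp) hr
  have hr₂ : c₂ ≤ r := le_trans (by simp) hr
  have hΛ1 : 0 < Λ - 1 := by linarith
  have hn0 : (0 : ℝ) < n := lt_of_lt_of_le (by positivity) hn
  have hnpos : 0 < n := by exact_mod_cast hn0
  have hn1 : (1 : ℝ) ≤ n := by exact_mod_cast hnpos
  set p : ℝ := 1 / (2 * n) with hp
  have hp0 : 0 ≤ p := by positivity
  have hp1 : p ≤ 1 := by rw [hp, div_le_one (by positivity)]; linarith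
  have hl : p / a ≤ Λ := by
    rw [div_le_iff₀ ha0, hp, ha, div_le_iff₀ (by positivity)]
    have h1 : 1 ≤ n * (Λ - 1) := (div_le_iff₀ hΛ1).1 hn
    have h2 : Λ * ((1 - 1 / Λ) / 2) * (2 * n) = n * (Λ - 1) := by field_simp
    rw [h2]; exact h1
  have hrr : (1 - p) / (1 - b) ≤ Λ := by
    rw [div_le_iff₀ (by linarith)]
    have : Λ * (1 - b) = 1 := by rw [hb]; field_simp; ring
    rw [this]; linarith
  have hone : ∀ t : ℝ, (fun _ : ℝ => (1 : ℝ)) t ∈ Icc (0 : ℝ) 1 := fun t => by simp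
  set D₀ : DataDist d := twoRegionDist hd ha0 hab hb1 hp0 hp1 (fun _ => 1) measurable_const hone
  set D₁ : DataDist d := twoRegionDist hd ha0 hab hb1 hp0 hp1 (ramp a b)
    (contDiff_ramp a b).continuous.measurable (ramp_mem_Icc a b)
  have hM := twoRegion_mem_MLam hd (Λ := Λ) ha0 hab hb1 hp0 hp1 hl hrr
  have hmem₀ : D₀ ∈ HCHL d q K dstar β r Λ ∩ Tsybakov d ∞ α τ := by
    refine ⟨⟨⟨_, comp_eval_zero_mem_GCH hK hs (hc₀ r hr₀) q hq d hd hsd (fun _ => 1)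
      (fun t _ => hone t) (hc₁ r hr₁), fun x _ => hone 0, Filter.Eventually.of_forall
      fun _ => rfl⟩, hM⟩, mem_Tsybakov_top D₀ ?_ hα hατ⟩
    exact Filter.Eventually.of_forall fun _ => Or.inr rfl
  have hmem₁ : D₁ ∈ HCHL d q K dstar β r Λ ∩ Tsybakov d ∞ α τ := by
    refine ⟨⟨⟨_, comp_eval_zero_mem_GCH hK hs (hc₀ r hr₀) q hq d hd hsd (ramp a b)
      (fun t _ => ramp_mem_Icc a b t) (hc₂ r hr₂), fun x _ => ramp_mem_Icc a b _,
      Filter.Eventually.of_forall fun _ => rfl⟩, hM⟩, mem_Tsybakov_top D₁ ?_ hα hατ⟩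
    filter_upwards [ae_twoRegion_region (a := a) (b := b) (p := p) hd] with x hx
    exact hx.imp (ramp_of_le hab) (ramp_of_ge hab)
  have : Nonempty {A : Estimator d n // A.Meas} := ⟨⟨fun _ _ => 0, measurable_const⟩⟩
  refine le_ciInf fun A => ?_
  have hbdd : BddAbove (range fun D : ↥(HCHL d q K dstar β r Λ ∩ Tsybakov d ∞ α τ) =>
      expectedExcess01 D.1.P A.1) := by
    refine ⟨1, ?_⟩
    rintro _ ⟨D, rfl⟩
    have := D.1.isProbabilityMeasure_P
    exact expectedExcess01_le_one _ _
  have hs₀ := le_ciSup hbdd ⟨D₀, hmem₀⟩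
  have hs₁ := le_ciSup hbdd ⟨D₁, hmem₁⟩
  set S : ℝ := ⨆ D : ↥(HCHL d q K dstar β r Λ ∩ Tsybakov d ∞ α τ), expectedExcess01 D.1.P A.1
  have hmain := twoRegion_minimax hd ha0 hab hb1 hp0 hp1 (D₀ := D₀) (D₁ := D₁) rfl rfl
    (fun _ => rfl) (fun _ => rfl) A.2
  have h3 : ENNReal.ofReal (p * (1 - p) ^ n) ≤ ENNReal.ofReal S + ENNReal.ofReal S := by
    rw [ENNReal.ofReal_mul hp0, ENNReal.ofReal_pow (by linarith)]
    exact hmain.trans (add_le_add (ENNReal.ofReal_le_ofReal hs₀) (ENNReal.ofReal_le_ofReal hs₁))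
  have h4 : p * (1 / 2) ≤ p * (1 - p) ^ n :=
    mul_le_mul_of_nonneg_left (half_le_one_sub_pow hnpos) hp0
  have hppos : 0 < p := by positivity
  have hS : 0 ≤ S := by
    by_contra hneg
    rw [ENNReal.ofReal_of_nonpos (not_le.1 hneg).le, add_zero, nonpos_iff_eq_zero,
      ENNReal.ofReal_eq_zero] at h3
    linarith
  rw [← ENNReal.ofReal_add hS hS, ENNReal.ofReal_le_ofReal_iff (by linarith)] at h3
  have h5 : 1 / (32 * (n : ℝ)) = p / 16 := by rw [hp]; field_simp; norm_num
  rw [h5]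
  linarith

end ZZS
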